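/- Let q ∈ ℂ with 0 < |q| < 1, let x ∈ ℂ∖{0} with x² ∉ q^ℤ, and let t ∈ ℂ∖{0} with t ∉ q^ℤ. Then f^{(−1)}(t,x,q) = − g^{(0,x^{−1})}(t,x,q) − g^{(0,x)}(t,x,q). -/

import Mathlib

open Finset Filter

/-- Finite q-Pochhammer symbol `(x;q)_k = ∏_{j=0}^{k-1} (1 - x q^j)`. -/
noncomputable def qPoch (x q : ℂ) (k : ℕ) : ℂ := ∏ j ∈ Finset.range k, (1 - x * q ^ j)

/-- Infinite q-Pochhammer symbol `(x;q)_∞ = ∏_{j=0}^{∞} (1 - x q^j)`. -/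
noncomputable def qPochInf (x q : ℂ) : ℂ := ∏' j : ℕ, (1 - x * q ^ j)

/-- The Jacobi theta function `θ(t;q) = Σ_{k∈ℤ} (−1)^k q^{k(k+1)/2} t^k`. -/
noncomputable def jtheta (t q : ℂ) : ℂ :=
  ∑' k : ℤ, (-1 : ℂ) ^ k * q ^ (k * (k + 1) / 2) * t ^ k

/-- The derivative `θ'(t;q) = Σ_{k∈ℤ} (−1)^k k q^{k(k+1)/2} t^k` (with respect to t d/dt). -/
noncomputable def jthetaD (t q : ℂ) : ℂ :=
  ∑' k : ℤ, (-1 : ℂ) ^ k * (k : ℂ) * q ^ (k * (k + 1) / 2) * t ^ k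

/-- The Eisenstein-type series `E₁(q) = 1 − 4 Σ_{j=1}^∞ q^j/(1−q^j)`. -/
noncomputable def E1 (q : ℂ) : ℂ := 1 - 4 * ∑' j : ℕ, q ^ (j + 1) / (1 - q ^ (j + 1))

/-- The Appell-Lerch sum
`AL(t,λ,q) = θ(λ;q)⁻¹ Σ_{ℓ∈ℤ} (−1)^ℓ q^{ℓ(ℓ+1)/2} λ^ℓ / (1 − λ t q^ℓ)`. -/
noncomputable def AL (t lam q : ℂ) : ℂ :=
  (jtheta lam q)⁻¹ *
    ∑' k : ℤ, (-1 : ℂ) ^ k * q ^ (k * (k + 1) / 2) * lam ^ k / (1 - lam * t * q ^ k)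

/-- The solution `g^{(0,0)}(t,q) = Σ_{k≥0} (−1)^k q^{k(k+1)/2} (q;q)_k^{−2} t^{−1−k}`. -/
noncomputable def g00 (t q : ℂ) : ℂ :=
  ∑' k : ℕ, (-1 : ℂ) ^ k * q ^ (k * (k + 1) / 2) / (qPoch q q k) ^ 2 * t ^ (-1 - (k : ℤ))

/-- The solution `g^{(0,1)}(t,q)`. -/
noncomputable def g01 (t q : ℂ) : ℂ :=
  ∑' k : ℕ,
    (E1 q / 2 - 1 / 2 - jthetaD t⁻¹ q / jtheta t⁻¹ q +
        ∑ j ∈ Finset.range k, (1 + q ^ (j + 1)) / (1 - q ^ (j + 1))) *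
      ((-1 : ℂ) ^ k * q ^ (k * (k + 1) / 2) / (qPoch q q k) ^ 2 * t ^ (-1 - (k : ℤ)))

/-- The solution `f^{(−1)}(t,x,q)` at `t = 0` of the x-deformed 4₁ equation. -/
noncomputable def fneg1 (t x q : ℂ) : ℂ :=
  jtheta (q⁻¹ * x) q / ((1 - x) * jtheta (q⁻¹ * t) q * qPochInf q q) *
    ∑' k : ℕ, ∑ l ∈ Finset.range (k + 1),
      (-1 : ℂ) ^ k * q ^ (k * (k + 1) / 2) * x ^ (2 * (l : ℤ) - k) * t ^ k /
        (qPoch q q l * qPoch q q (k - l))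

/-- The solution `g^{(0,x^{−1})}(t,x,q)` at `t = ∞` of the x-deformed 4₁ equation.
The solution `g^{(0,x)}(t,x,q)` is `gxinv t x⁻¹ q`. -/
noncomputable def gxinv (t x q : ℂ) : ℂ :=
  jtheta (q⁻¹ * x) q * jtheta (t * x) q * qPochInf (q * x ^ 2) q /
      (jtheta t q * jtheta (x ^ 2) q * (1 - x) * qPochInf q q) *
    ∑' k : ℕ, (-1 : ℂ) ^ k * q ^ (k * (k + 1) / 2) * x ^ k * t ^ (-(k : ℤ) - 1) /
      (qPoch q q k * qPoch (q * x ^ 2) q k)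

/-!
Write `J(a,b) = ∑_{l,m} (-1)^{l+m} q^{(l+m)(l+m+1)/2} a^l b^m / ((q;q)_l (q;q)_m)`. Up to a common
factor, `f^{(-1)}(t,x,q)` is `-J(tx, t/x)` and, after summing over `l` by Euler's expansion of
`(qz;q)_∞`, `g^{(0,x^{-1})}(t,x,q)` is `θ(tx) J(x², x/t) / θ(x²)`. The theorem is therefore a
three-term relation between products of the form `θ(z) J(zw,w)`. Expanding `θ(z)` and applying the
finite `q`-binomial theorem to each homogeneous part of `J` gives
`θ(z) J(zw,w) = A(zw,z) - z⁻¹ A(w,z⁻¹)`, where `A(u,v)` is a power series with Gaussian binomial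
coefficients, symmetric in `u` and `v`. This symmetry yields the relation.

The homogeneous parts of the same expansion show that `θ(z) ≠ 0` off `q^ℤ`: for `|z| < 1` the part
of degree `m`, divided by `w^m`, tends to `-z⁻¹ (q/z;q)_∞` as `m → ∞`.
-/

open Topology

/-- The coefficient `(-1)^k q^{k(k+1)/2}` of `t ^ k` in the theta function `jtheta t q`. -/
noncomputable def thetaCoeff (q : ℂ) (k : ℤ) : ℂ := (-1) ^ k * q ^ (k * (k + 1) / 2)

/-- The Gaussian binomial coefficient `[m+n choose m]_q`, parametrised by `m` and `n` so that it is
visibly symmetric. -/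
noncomputable def qBinom (q : ℂ) (m n : ℕ) : ℂ := qPoch q q (m + n) / (qPoch q q m * qPoch q q n)

/-- The homogeneous Rogers–Szegő polynomial, divided by `(q;q)_n`. -/
noncomputable def rogersSzego (a b q : ℂ) (n : ℕ) : ℂ :=
  ∑ p ∈ antidiagonal n, a ^ p.1 * b ^ p.2 / (qPoch q q p.1 * qPoch q q p.2)

/-- The double series `J(a,b)`, encoded as a single series by grouping the terms of equal total
degree `n = l + m`. The series in both `fneg1` and `gxinv` are expressed through `J`. -/
noncomputable def rogersSzegoSeries (a b q : ℂ) : ℂ :=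
  ∑' n : ℕ, thetaCoeff q n * rogersSzego a b q n

/-- The series `A(u,v) = ∑_{m,n} [m+n choose m]_q (-1)^{m+n} q^{m(m+1)/2 + n(n+1)/2} u^m v^n`, in
terms of which every product `θ(z) J(zw,w)` is expanded. -/
noncomputable def qBinomSeries (u v q : ℂ) : ℂ :=
  ∑' p : ℕ × ℕ, qBinom q p.1 p.2 * (thetaCoeff q p.1 * u ^ p.1 * (thetaCoeff q p.2 * v ^ p.2))

section ThetaCoeff

variable {q : ℂ}

lemma thetaCoeff_natCast (q : ℂ) (n : ℕ) :
    thetaCoeff q n = (-1) ^ n * q ^ (n * (n + 1) / 2) := by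
  rw [thetaCoeff, zpow_natCast]
  norm_cast

lemma thetaCoeff_add (hq0 : q ≠ 0) (i j : ℤ) :
    thetaCoeff q (i + j) = thetaCoeff q i * thetaCoeff q j * q ^ (i * j) := by
  have exponent_add :
      (i + j) * (i + j + 1) / 2 = i * (i + 1) / 2 + j * (j + 1) / 2 + i * j := by
    have hi := Int.mul_ediv_cancel' (Int.even_mul_succ_self i).two_dvd
    have hj := Int.mul_ediv_cancel' (Int.even_mul_succ_self j).two_dvd
    have hij := Int.mul_ediv_cancel' (Int.even_mul_succ_self (i + j)).two_dvd
    linarith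
  simp only [thetaCoeff]
  rw [exponent_add, zpow_add₀ (neg_ne_zero.2 one_ne_zero), zpow_add₀ hq0, zpow_add₀ hq0]
  ring

lemma thetaCoeff_add_one (hq0 : q ≠ 0) (k : ℤ) :
    thetaCoeff q (k + 1) = -(thetaCoeff q k * q ^ (k + 1)) := by
  have thetaCoeff_one : thetaCoeff q 1 = -q := by simp [thetaCoeff]
  rw [thetaCoeff_add hq0, thetaCoeff_one, zpow_add_one₀ hq0, mul_one]
  ring

lemma thetaCoeff_neg_add_one (q : ℂ) (k : ℤ) : thetaCoeff q (-(k + 1)) = -thetaCoeff q k := by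
  have exponent_eq : -(k + 1) * (-(k + 1) + 1) = k * (k + 1) := by ring
  rw [thetaCoeff, exponent_eq, thetaCoeff, zpow_neg, zpow_add_one₀ (neg_ne_zero.2 one_ne_zero),
    mul_inv, ← inv_zpow, inv_neg_one]
  ring

lemma thetaCoeff_neg (hq0 : q ≠ 0) (k : ℤ) : thetaCoeff q (-k) = thetaCoeff q k * q ^ (-k) := by
  obtain ⟨k, rfl⟩ : ∃ j, k = j + 1 := ⟨k - 1, by ring⟩
  rw [thetaCoeff_neg_add_one, thetaCoeff_add_one hq0, neg_mul, mul_assoc, ← zpow_add₀ hq0,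
    add_neg_cancel, zpow_zero, mul_one]

lemma thetaCoeff_natCast_add_one (hq0 : q ≠ 0) (n : ℕ) :
    thetaCoeff q (n + 1 : ℕ) = -(thetaCoeff q n * q ^ (n + 1)) := by
  push_cast
  rw [thetaCoeff_add_one hq0]
  norm_cast

lemma summable_norm_thetaCoeff_mul_pow (hq0 : q ≠ 0) (hq1 : ‖q‖ < 1) (z : ℂ) :
    Summable fun n : ℕ => ‖thetaCoeff q n * z ^ n‖ := by
  have ratio_tendsto : Tendsto (fun n : ℕ => ‖q ^ n * (q * z)‖) atTop (𝓝 0) := by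
    simpa using ((tendsto_pow_atTop_nhds_zero_of_norm_lt_one hq1).mul_const (q * z)).norm
  have step (n : ℕ) : thetaCoeff q (n + 1 : ℕ) * z ^ (n + 1) =
      -(q ^ n * (q * z)) * (thetaCoeff q n * z ^ n) := by
    rw [thetaCoeff_natCast_add_one hq0]
    ring
  have ratio_le : ∀ᶠ n : ℕ in atTop, ‖thetaCoeff q (n + 1 : ℕ) * z ^ (n + 1)‖ ≤
      1 / 2 * ‖thetaCoeff q n * z ^ n‖ := by
    filter_upwards [ratio_tendsto.eventually_le_const one_half_pos] with n hn
    rw [step, norm_mul, norm_neg]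
    gcongr
  have summable := summable_of_ratio_norm_eventually_le
    (f := fun n : ℕ => thetaCoeff q n * z ^ n) one_half_lt_one ratio_le
  exact summable.norm

lemma hasSum_jtheta (hq0 : q ≠ 0) (hq1 : ‖q‖ < 1) {t : ℂ} (ht : t ≠ 0) :
    HasSum (fun k : ℤ => thetaCoeff q k * t ^ k) (jtheta t q) := by
  refine Summable.hasSum (.of_nat_of_neg_add_one ?_ ?_)
  · simpa only [zpow_natCast] using (summable_norm_thetaCoeff_mul_pow hq0 hq1 t).of_norm
  · have summable_inv := (summable_norm_thetaCoeff_mul_pow hq0 hq1 t⁻¹).of_norm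
    refine (summable_inv.mul_left (-t⁻¹)).congr fun n => ?_
    rw [thetaCoeff_neg_add_one, zpow_neg, zpow_add_one₀ ht, zpow_natCast, mul_inv, inv_pow]
    ring

lemma jtheta_inv_mul (hq0 : q ≠ 0) (hq1 : ‖q‖ < 1) {t : ℂ} (ht : t ≠ 0) :
    jtheta (q⁻¹ * t) q = -t * jtheta t q := by
  have shifted := (Equiv.addRight (1 : ℤ)).hasSum_iff.2
    (hasSum_jtheta hq0 hq1 (mul_ne_zero (inv_ne_zero hq0) ht))
  refine shifted.unique (((hasSum_jtheta hq0 hq1 ht).mul_left (-t)).congr_fun fun k => ?_)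
  rw [Function.comp_apply, Equiv.coe_addRight, thetaCoeff_add_one hq0, mul_zpow, inv_zpow,
    zpow_add_one₀ ht]
  field_simp [zpow_ne_zero (k + 1) hq0]

lemma jtheta_inv (hq0 : q ≠ 0) (hq1 : ‖q‖ < 1) {t : ℂ} (ht : t ≠ 0) :
    jtheta t⁻¹ q = -t * jtheta t q := by
  have reflected := ((Equiv.addRight (1 : ℤ)).trans (Equiv.neg ℤ)).hasSum_iff.2
    (hasSum_jtheta hq0 hq1 (inv_ne_zero ht))
  refine reflected.unique (((hasSum_jtheta hq0 hq1 ht).mul_left (-t)).congr_fun fun k => ?_)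
  simp only [Function.comp_apply, Equiv.trans_apply, Equiv.coe_addRight, Equiv.neg_apply,
    thetaCoeff_neg_add_one, inv_zpow', neg_neg, zpow_add_one₀ ht]
  ring

end ThetaCoeff

section QPochhammer

variable {q : ℂ}

lemma qPoch_succ (c q : ℂ) (n : ℕ) : qPoch c q (n + 1) = qPoch c q n * (1 - c * q ^ n) :=
  prod_range_succ _ _

lemma qPoch_succ' (c q : ℂ) (n : ℕ) : qPoch c q (n + 1) = (1 - c) * qPoch (c * q) q n := by
  simp only [qPoch, prod_range_succ', pow_zero, mul_one, pow_succ', mul_assoc, mul_comm]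

lemma qPoch_add (c q : ℂ) (m n : ℕ) :
    qPoch c q (m + n) = qPoch c q m * qPoch (c * q ^ m) q n := by
  simp only [qPoch, prod_range_add, pow_add, mul_assoc]

lemma qPoch_ne_zero {c : ℂ} {n : ℕ} (hc : ∀ j < n, 1 - c * q ^ j ≠ 0) : qPoch c q n ≠ 0 :=
  prod_ne_zero_iff.2 fun j hj => hc j (mem_range.1 hj)

lemma one_sub_self_mul_pow_ne_zero (hq1 : ‖q‖ < 1) (j : ℕ) : 1 - q * q ^ j ≠ 0 := by
  rw [← pow_succ', sub_ne_zero]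
  intro h
  have norm_lt : ‖q ^ (j + 1)‖ < 1 := by
    rw [norm_pow]
    exact pow_lt_one₀ (norm_nonneg q) hq1 j.succ_ne_zero
  simp [← h] at norm_lt

lemma one_sub_mul_pow_ne_zero_of_ne_zpow (hq0 : q ≠ 0) {c : ℂ} (hc : ∀ n : ℤ, c ≠ q ^ n) (j : ℕ) :
    1 - q * c * q ^ j ≠ 0 := by
  intro h
  apply hc (-(j + 1))
  rw [zpow_neg, zpow_add_one₀ hq0, zpow_natCast]
  exact eq_inv_of_mul_eq_one_left (by linear_combination -h)

lemma qPoch_self_ne_zero (hq1 : ‖q‖ < 1) (n : ℕ) : qPoch q q n ≠ 0 :=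
  qPoch_ne_zero fun j _ => one_sub_self_mul_pow_ne_zero hq1 j

lemma summable_norm_neg_mul_pow (hq1 : ‖q‖ < 1) (c : ℂ) : Summable fun j : ℕ => ‖-(c * q ^ j)‖ := by
  simp only [norm_neg]
  exact ((summable_geometric_of_norm_lt_one hq1).mul_left c).norm

lemma multipliable_one_sub_mul_pow (hq1 : ‖q‖ < 1) (c : ℂ) :
    Multipliable fun j : ℕ => 1 - c * q ^ j := by
  simpa only [sub_eq_add_neg] using
    multipliable_one_add_of_summable (summable_norm_neg_mul_pow hq1 c)

lemma tendsto_qPoch (hq1 : ‖q‖ < 1) (c : ℂ) :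
    Tendsto (qPoch c q) atTop (𝓝 (qPochInf c q)) :=
  (multipliable_one_sub_mul_pow hq1 c).hasProd.tendsto_prod_nat

lemma qPochInf_ne_zero (hq1 : ‖q‖ < 1) {c : ℂ} (hc : ∀ j : ℕ, 1 - c * q ^ j ≠ 0) :
    qPochInf c q ≠ 0 := by
  simp only [sub_eq_add_neg] at hc
  simpa only [qPochInf, sub_eq_add_neg] using
    tprod_one_add_ne_zero_of_summable hc (summable_norm_neg_mul_pow hq1 c)

lemma qPochInf_self_ne_zero (hq1 : ‖q‖ < 1) : qPochInf q q ≠ 0 :=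
  qPochInf_ne_zero hq1 (one_sub_self_mul_pow_ne_zero hq1)

lemma qPoch_mul_qPochInf (hq1 : ‖q‖ < 1) (c : ℂ) (n : ℕ) :
    qPoch c q n * qPochInf (c * q ^ n) q = qPochInf c q := by
  have shifted := (tendsto_qPoch hq1 c).comp (tendsto_add_atTop_nat n)
  refine tendsto_nhds_unique ((tendsto_qPoch hq1 (c * q ^ n)).const_mul (qPoch c q n)) ?_
  refine shifted.congr fun m => ?_
  rw [Function.comp_apply, add_comm, qPoch_add]

lemma exists_norm_qPoch_self_le (hq1 : ‖q‖ < 1) : ∃ C, ∀ n, ‖qPoch q q n‖ ≤ C := by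
  obtain ⟨C, hC⟩ := (Metric.isBounded_range_of_tendsto _ (tendsto_qPoch hq1 q)).exists_norm_le
  exact ⟨C, fun n => hC _ ⟨n, rfl⟩⟩

lemma exists_norm_inv_qPoch_self_le (hq1 : ‖q‖ < 1) : ∃ C, ∀ n, ‖(qPoch q q n)⁻¹‖ ≤ C := by
  obtain ⟨C, hC⟩ := (Metric.isBounded_range_of_tendsto _
    ((tendsto_qPoch hq1 q).inv₀ (qPochInf_self_ne_zero hq1))).exists_norm_le
  exact ⟨C, fun n => hC _ ⟨n, rfl⟩⟩

end QPochhammer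

section QBinomialTheorem

lemma tendsto_sum_antidiagonal_mul {R : Type*} [NormedRing R] [CompleteSpace R] {f u : ℕ → R}
    {L : R} (hf : Summable fun k => ‖f k‖) (hu : Tendsto u atTop (𝓝 L)) :
    Tendsto (fun n => ∑ p ∈ antidiagonal n, f p.1 * u p.2) atTop (𝓝 ((∑' k, f k) * L)) := by
  obtain ⟨C, hC⟩ := (Metric.isBounded_range_of_tendsto u hu).exists_norm_le
  have norm_u_le (n : ℕ) : ‖u n‖ ≤ C := hC _ ⟨n, rfl⟩
  have C_nonneg : 0 ≤ C := (norm_nonneg _).trans (norm_u_le 0)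
  have tannery : Tendsto (fun n => ∑' k, if k ≤ n then f k * u (n - k) else 0) atTop
      (𝓝 (∑' k, f k * L)) := by
    refine tendsto_tsum_of_dominated_convergence (hf.mul_right C) (fun k => ?_)
      (.of_forall fun n k => ?_)
    · refine ((hu.comp (tendsto_sub_atTop_nat k)).const_mul (f k)).congr' ?_
      filter_upwards [eventually_ge_atTop k] with n hn
      rw [if_pos hn, Function.comp_apply]
    · split_ifs
      · refine (norm_mul_le _ _).trans ?_
        gcongr
        exact norm_u_le _
      · rw [norm_zero]
        positivity
  rw [hf.of_norm.tsum_mul_right] at tannery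
  refine tannery.congr fun n => ?_
  rw [Nat.sum_antidiagonal_eq_sum_range_succ_mk,
    tsum_eq_sum (s := range (n + 1)) fun k hk => if_neg fun h => hk (mem_range_succ_iff.2 h)]
  exact sum_congr rfl fun k hk => if_pos (mem_range_succ_iff.1 hk)

variable {q : ℂ}

lemma sum_antidiagonal_thetaCoeff_mul_pow_succ (hq0 : q ≠ 0) (hq1 : ‖q‖ < 1) (z : ℂ) (n : ℕ) :
    (1 - q * q ^ n) * ∑ p ∈ antidiagonal (n + 1),
        thetaCoeff q p.1 * z ^ p.1 / (qPoch q q p.1 * qPoch q q p.2) =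
      (1 - q * z * q ^ n) * ∑ p ∈ antidiagonal n,
        thetaCoeff q p.1 * z ^ p.1 / (qPoch q q p.1 * qPoch q q p.2) := by
  have factor_ne (k : ℕ) : 1 - q * q ^ k ≠ 0 := one_sub_self_mul_pow_ne_zero hq1 k
  have poch_ne (k : ℕ) : qPoch q q k ≠ 0 := qPoch_self_ne_zero hq1 k
  set term : ℕ × ℕ → ℂ := fun p =>
    thetaCoeff q p.1 * z ^ p.1 / (qPoch q q p.1 * qPoch q q p.2) with term_def
  have sum_lower_snd : ∑ p ∈ antidiagonal (n + 1), (1 - q ^ p.2) * term p =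
      ∑ p ∈ antidiagonal n, term p := by
    rw [Nat.sum_antidiagonal_succ', pow_zero, sub_self, zero_mul, zero_add]
    refine sum_congr rfl fun p _ => ?_
    simp only [term_def, qPoch_succ, pow_succ']
    field_simp [factor_ne, poch_ne]
  have sum_lower_fst : ∑ p ∈ antidiagonal (n + 1), q ^ p.2 * (1 - q ^ p.1) * term p =
      -(q ^ (n + 1) * z) * ∑ p ∈ antidiagonal n, term p := by
    rw [Nat.sum_antidiagonal_succ, pow_zero, sub_self, mul_zero, zero_mul, zero_add, mul_sum]
    refine sum_congr rfl fun p hp => ?_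
    rw [← mem_antidiagonal.1 hp]
    simp only [term_def, qPoch_succ, thetaCoeff_natCast_add_one hq0]
    field_simp [factor_ne, poch_ne]
    ring
  calc (1 - q * q ^ n) * ∑ p ∈ antidiagonal (n + 1), term p
      = ∑ p ∈ antidiagonal (n + 1), (1 - q ^ p.2) * term p +
          ∑ p ∈ antidiagonal (n + 1), q ^ p.2 * (1 - q ^ p.1) * term p := by
        rw [mul_sum, ← sum_add_distrib]
        refine sum_congr rfl fun p hp => ?_
        rw [← pow_succ', ← mem_antidiagonal.1 hp]
        ring
    _ = (1 - q * z * q ^ n) * ∑ p ∈ antidiagonal n, term p := by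
        rw [sum_lower_snd, sum_lower_fst]
        ring

lemma sum_antidiagonal_thetaCoeff_mul_pow (hq0 : q ≠ 0) (hq1 : ‖q‖ < 1) (z : ℂ) (n : ℕ) :
    ∑ p ∈ antidiagonal n, thetaCoeff q p.1 * z ^ p.1 / (qPoch q q p.1 * qPoch q q p.2) =
      qPoch (q * z) q n / qPoch q q n := by
  induction n with
  | zero => simp [qPoch, thetaCoeff]
  | succ n ih =>
    have factor_ne := one_sub_self_mul_pow_ne_zero hq1 n
    refine mul_left_cancel₀ factor_ne ?_
    rw [sum_antidiagonal_thetaCoeff_mul_pow_succ hq0 hq1, ih, qPoch_succ, qPoch_succ]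
    field_simp [qPoch_self_ne_zero hq1 n]

lemma summable_norm_thetaCoeff_mul_pow_div_qPoch (hq0 : q ≠ 0) (hq1 : ‖q‖ < 1) (z : ℂ) :
    Summable fun k : ℕ => ‖thetaCoeff q k * z ^ k / qPoch q q k‖ := by
  obtain ⟨C, hC⟩ := exists_norm_inv_qPoch_self_le hq1
  have bound_summable := (summable_norm_thetaCoeff_mul_pow hq0 hq1 z).mul_right C
  refine bound_summable.of_nonneg_of_le (fun _ => norm_nonneg _) fun k => ?_
  rw [div_eq_mul_inv, norm_mul]
  gcongr
  exact hC k

lemma hasSum_thetaCoeff_mul_pow_div_qPoch (hq0 : q ≠ 0) (hq1 : ‖q‖ < 1) (z : ℂ) :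
    HasSum (fun k : ℕ => thetaCoeff q k * z ^ k / qPoch q q k) (qPochInf (q * z) q) := by
  have limit_ne := qPochInf_self_ne_zero hq1
  have summable_norm := summable_norm_thetaCoeff_mul_pow_div_qPoch hq0 hq1 z
  have quotient_tendsto := (tendsto_qPoch hq1 (q * z)).div (tendsto_qPoch hq1 q) limit_ne
  have sum_tendsto :=
    tendsto_sum_antidiagonal_mul summable_norm ((tendsto_qPoch hq1 q).inv₀ limit_ne)
  have limits_eq := tendsto_nhds_unique quotient_tendsto (sum_tendsto.congr fun n => by
    simp only [Pi.div_apply, ← sum_antidiagonal_thetaCoeff_mul_pow hq0 hq1, ← div_eq_mul_inv,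
      div_mul_eq_div_div])
  rw [← div_eq_mul_inv, div_left_inj' limit_ne] at limits_eq
  exact limits_eq ▸ summable_norm.of_norm.hasSum

end QBinomialTheorem

section ThetaMulRogersSzego

variable {q : ℂ}

lemma qBinom_comm (q : ℂ) (m n : ℕ) : qBinom q m n = qBinom q n m := by
  rw [qBinom, qBinom, add_comm, mul_comm (qPoch q q m)]

lemma qBinom_eq_qPoch_div (hq1 : ‖q‖ < 1) (m n : ℕ) :
    qBinom q m n = qPoch (q * q ^ n) q m / qPoch q q m := by
  rw [qBinom, add_comm, qPoch_add]
  field_simp [qPoch_self_ne_zero hq1]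

lemma exists_norm_qBinom_le (hq1 : ‖q‖ < 1) : ∃ C, ∀ p : ℕ × ℕ, ‖qBinom q p.1 p.2‖ ≤ C := by
  obtain ⟨C, hC⟩ := exists_norm_qPoch_self_le hq1
  obtain ⟨D, hD⟩ := exists_norm_inv_qPoch_self_le hq1
  have C_nonneg : 0 ≤ C := (norm_nonneg _).trans (hC 0)
  have D_nonneg : 0 ≤ D := (norm_nonneg _).trans (hD 0)
  refine ⟨C * (D * D), fun p => ?_⟩
  rw [qBinom, div_eq_mul_inv, mul_inv, norm_mul, norm_mul]
  gcongr
  exacts [hC _, hD _, hD _]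

lemma tendsto_qBinom (hq1 : ‖q‖ < 1) (n : ℕ) :
    Tendsto (fun m => qBinom q m n) atTop (𝓝 (qPoch q q n)⁻¹) := by
  have limit_ne := qPochInf_self_ne_zero hq1
  have shifted := (tendsto_qPoch hq1 q).comp (tendsto_add_atTop_nat n)
  have quotient := (shifted.div (tendsto_qPoch hq1 q) limit_ne).div_const (qPoch q q n)
  rw [div_self limit_ne, one_div] at quotient
  exact quotient.congr fun m => (div_mul_eq_div_div _ _ _).symm

lemma thetaCoeff_mul_qPoch_inv (hq0 : q ≠ 0) {y : ℂ} (hy : y ≠ 0) (n : ℕ) :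
    thetaCoeff q n * y ^ n * qPoch (y * q ^ n)⁻¹ q n = qPoch (q * y) q n := by
  induction n with
  | zero => simp [qPoch, thetaCoeff]
  | succ n ih =>
    have shift : (y * q ^ (n + 1))⁻¹ * q = (y * q ^ n)⁻¹ := by
      rw [pow_succ]
      field_simp
    rw [qPoch_succ', shift, qPoch_succ, ← ih, thetaCoeff_natCast_add_one hq0]
    field_simp
    ring

lemma thetaCoeff_mul_qPoch_inv_pow_add (hq0 : q ≠ 0) (hq1 : ‖q‖ < 1) (m n : ℕ) :
    thetaCoeff q (m + n : ℕ) * (qPoch (q ^ (m + n))⁻¹ q m / qPoch q q m) =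
      thetaCoeff q n * qBinom q m n := by
  have reflected := thetaCoeff_mul_qPoch_inv hq0 (pow_ne_zero n hq0) m
  rw [qBinom_eq_qPoch_div hq1, ← reflected, Nat.cast_add, thetaCoeff_add hq0, ← pow_add, add_comm n,
    ← pow_mul, mul_comm n, ← Nat.cast_mul, zpow_natCast]
  ring

lemma qPoch_inv_pow_eq_zero (hq0 : q ≠ 0) {m n : ℕ} (hmn : m < n) : qPoch (q ^ m)⁻¹ q n = 0 := by
  refine prod_eq_zero (mem_range.2 hmn) ?_
  rw [inv_mul_cancel₀ (pow_ne_zero m hq0), sub_self]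

lemma hasSum_int_jtheta_mul_rogersSzego (hq0 : q ≠ 0) (hq1 : ‖q‖ < 1) {z : ℂ} (hz : z ≠ 0)
    (w : ℂ) (n : ℕ) :
    HasSum (fun i : ℤ => thetaCoeff q i * (qPoch (q ^ i)⁻¹ q n / qPoch q q n) * z ^ i * w ^ n)
      (jtheta z q * rogersSzego (z * w) w q n) := by
  have shifted (p : ℕ × ℕ) := ((Equiv.subRight (p.1 : ℤ)).hasSum_iff.2
    (hasSum_jtheta hq0 hq1 hz)).mul_right
      ((z * w) ^ p.1 * w ^ p.2 / (qPoch q q p.1 * qPoch q q p.2))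
  rw [rogersSzego, mul_sum]
  refine (hasSum_sum fun p _ => shifted p).congr_fun fun i => ?_
  have q_binomial := sum_antidiagonal_thetaCoeff_mul_pow hq0 hq1 (q ^ (-i - 1)) n
  rw [← zpow_one_add₀ hq0, add_sub_cancel, zpow_neg] at q_binomial
  have thetaCoeff_sub (l : ℕ) :
      thetaCoeff q (i - l) = thetaCoeff q i * (thetaCoeff q l * (q ^ (-i - 1)) ^ l) := by
    have exponent_eq : (-i - 1) * (l : ℤ) = -l + i * -l := by ring
    rw [sub_eq_add_neg, thetaCoeff_add hq0, thetaCoeff_neg hq0, ← zpow_natCast (q ^ _), ← zpow_mul,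
      exponent_eq, zpow_add₀ hq0]
    ring
  rw [← q_binomial, mul_sum, sum_mul, sum_mul]
  refine sum_congr rfl fun p hp => ?_
  rw [Function.comp_apply, Equiv.subRight_apply, thetaCoeff_sub, ← mem_antidiagonal.1 hp,
    zpow_sub₀ hz, zpow_natCast, mul_pow, pow_add w]
  field_simp

lemma hasSum_nat_jtheta_mul_rogersSzego (hq0 : q ≠ 0) (hq1 : ‖q‖ < 1) {z : ℂ} (hz : z ≠ 0)
    (w : ℂ) (m : ℕ) :
    HasSum (fun n : ℕ => thetaCoeff q n * qBinom q m n * (z ^ (m + n) - z⁻¹ ^ (n + 1)) * w ^ m)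
      (jtheta z q * rogersSzego (z * w) w q m) := by
  have bilateral := hasSum_int_jtheta_mul_rogersSzego hq0 hq1 hz w m
  set term : ℤ → ℂ := fun i =>
    thetaCoeff q i * (qPoch (q ^ i)⁻¹ q m / qPoch q q m) * z ^ i * w ^ m with term_def
  have nonneg := (bilateral.summable.comp_injective Nat.cast_injective).hasSum
  have neg := (bilateral.summable.comp_injective (i := fun n : ℕ => -(n + 1 : ℤ))
    fun _ _ h => by simpa using h).hasSum
  rw [← (nonneg.of_nat_of_neg_add_one neg).unique bilateral]
  have first_terms_zero : ∑ i ∈ range m, (term ∘ Nat.cast) i = 0 := by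
    refine sum_eq_zero fun i hi => ?_
    simp only [term_def, Function.comp_apply, zpow_natCast,
      qPoch_inv_pow_eq_zero hq0 (mem_range.1 hi), zero_div, mul_zero, zero_mul]
  rw [← hasSum_nat_add_iff' m, first_terms_zero, sub_zero] at nonneg
  refine (nonneg.add neg).congr_fun fun n => ?_
  have term_nonneg : term (n + m : ℕ) = thetaCoeff q n * qBinom q m n * z ^ (m + n) * w ^ m := by
    simp only [term_def, zpow_natCast, add_comm n m, thetaCoeff_mul_qPoch_inv_pow_add hq0 hq1]
  have term_neg : term (-(n + 1)) = -(thetaCoeff q n * qBinom q m n * z⁻¹ ^ (n + 1) * w ^ m) := by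
    simp only [term_def, zpow_neg, inv_inv]
    rw [thetaCoeff_neg_add_one, qBinom_eq_qPoch_div hq1, ← pow_succ', inv_pow]
    norm_cast
    ring
  rw [Function.comp_apply, Function.comp_apply, term_nonneg, term_neg]
  ring

end ThetaMulRogersSzego

section ThetaExpansion

variable {q : ℂ}

lemma summable_mul_thetaCoeff_mul_pow (hq0 : q ≠ 0) (hq1 : ‖q‖ < 1) {c : ℕ × ℕ → ℂ}
    (hc : ∃ C, ∀ p, ‖c p‖ ≤ C) (u v : ℂ) :
    Summable fun p : ℕ × ℕ =>
      c p * (thetaCoeff q p.1 * u ^ p.1 * (thetaCoeff q p.2 * v ^ p.2)) := by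
  obtain ⟨C, hC⟩ := hc
  have bound := (summable_norm_thetaCoeff_mul_pow hq0 hq1 u).mul_norm
    (summable_norm_thetaCoeff_mul_pow hq0 hq1 v)
  refine (bound.mul_left C).of_norm_bounded fun p => ?_
  rw [norm_mul]
  gcongr
  exact hC p

lemma hasSum_qBinomSeries (hq0 : q ≠ 0) (hq1 : ‖q‖ < 1) (u v : ℂ) :
    HasSum (fun p : ℕ × ℕ =>
      qBinom q p.1 p.2 * (thetaCoeff q p.1 * u ^ p.1 * (thetaCoeff q p.2 * v ^ p.2)))
      (qBinomSeries u v q) :=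
  (summable_mul_thetaCoeff_mul_pow hq0 hq1 (exists_norm_qBinom_le hq1) u v).hasSum

lemma qBinomSeries_comm (u v q : ℂ) : qBinomSeries u v q = qBinomSeries v u q := by
  rw [qBinomSeries, qBinomSeries, ← (Equiv.prodComm ℕ ℕ).tsum_eq]
  refine tsum_congr fun p => ?_
  simp only [Equiv.prodComm_apply, Prod.fst_swap, Prod.snd_swap]
  rw [qBinom_comm, mul_comm (thetaCoeff q p.2 * _)]

lemma jtheta_mul_rogersSzegoSeries (hq0 : q ≠ 0) (hq1 : ‖q‖ < 1) {z : ℂ} (hz : z ≠ 0) (w : ℂ) :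
    jtheta z q * rogersSzegoSeries (z * w) w q =
      qBinomSeries (z * w) z q - z⁻¹ * qBinomSeries w z⁻¹ q := by
  have double_sum := (hasSum_qBinomSeries hq0 hq1 (z * w) z).sub
    ((hasSum_qBinomSeries hq0 hq1 w z⁻¹).mul_left z⁻¹)
  rw [rogersSzegoSeries, ← tsum_mul_left]
  refine (double_sum.prod_fiberwise fun m => ?_).tsum_eq
  refine (mul_left_comm (jtheta z q) _ _ ▸
    (hasSum_nat_jtheta_mul_rogersSzego hq0 hq1 hz w m).mul_left (thetaCoeff q m)).congr_fun
      fun n => ?_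
  ring

/- With `K(z,w) = θ(z) J(zw,w)`, each of `K(a/b,b)`, `K(a,1/b)` and `K(b,1/a)` is a difference of
two values of the symmetric series `A`, and the six values cancel in pairs. -/
lemma jtheta_div_mul_rogersSzegoSeries (hq0 : q ≠ 0) (hq1 : ‖q‖ < 1) {a b : ℂ} (ha : a ≠ 0)
    (hb : b ≠ 0) :
    jtheta (a / b) q * rogersSzegoSeries a b q =
      jtheta a q * rogersSzegoSeries (a / b) b⁻¹ q -
        b / a * (jtheta b q * rogersSzegoSeries (b / a) a⁻¹ q) := by
  have expand_ab := jtheta_mul_rogersSzegoSeries hq0 hq1 (div_ne_zero ha hb) b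
  have expand_a := jtheta_mul_rogersSzegoSeries hq0 hq1 ha b⁻¹
  have expand_b := jtheta_mul_rogersSzegoSeries hq0 hq1 hb a⁻¹
  rw [div_mul_cancel₀ a hb, inv_div] at expand_ab
  rw [← div_eq_mul_inv] at expand_a expand_b
  rw [expand_ab, expand_a, expand_b, qBinomSeries_comm a (a / b), qBinomSeries_comm b (b / a),
    qBinomSeries_comm b⁻¹ a⁻¹]
  field_simp
  ring

end ThetaExpansion

section ThetaZeros

variable {q : ℂ}

lemma tendsto_tsum_thetaCoeff_mul_qBinom (hq0 : q ≠ 0) (hq1 : ‖q‖ < 1) {z : ℂ} (hz : ‖z‖ < 1) :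
    Tendsto (fun m : ℕ => ∑' n : ℕ,
        thetaCoeff q n * qBinom q m n * (z ^ (m + n) - z⁻¹ ^ (n + 1))) atTop
      (𝓝 (-z⁻¹ * qPochInf (q * z⁻¹) q)) := by
  obtain ⟨C, hC⟩ := exists_norm_qBinom_le hq1
  have C_nonneg : 0 ≤ C := (norm_nonneg _).trans (hC 0)
  rw [← ((hasSum_thetaCoeff_mul_pow_div_qPoch hq0 hq1 z⁻¹).mul_left (-z⁻¹)).tsum_eq]
  have bound_summable := ((summable_norm_thetaCoeff_mul_pow hq0 hq1 1).mul_left C).add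
    ((summable_norm_thetaCoeff_mul_pow hq0 hq1 z⁻¹).mul_left (C * ‖z⁻¹‖))
  refine tendsto_tsum_of_dominated_convergence bound_summable (fun n => ?_)
    (.of_forall fun m n => ?_)
  · have pow_tendsto := (tendsto_pow_atTop_nhds_zero_of_norm_lt_one hz).comp
      (tendsto_add_atTop_nat n)
    have limit_eq : -z⁻¹ * (thetaCoeff q n * z⁻¹ ^ n / qPoch q q n) =
        thetaCoeff q n * (qPoch q q n)⁻¹ * (0 - z⁻¹ ^ (n + 1)) := by
      ring
    rw [limit_eq]
    exact ((tendsto_qBinom hq1 n).const_mul (thetaCoeff q n)).mul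
      (pow_tendsto.sub_const (z⁻¹ ^ (n + 1)))
  · have pow_le : ‖z ^ (m + n)‖ ≤ 1 := by
      rw [norm_pow]
      exact pow_le_one₀ (norm_nonneg z) hz.le
    calc ‖thetaCoeff q n * qBinom q m n * (z ^ (m + n) - z⁻¹ ^ (n + 1))‖
        ≤ ‖thetaCoeff q n‖ * C * (1 + ‖z⁻¹ ^ (n + 1)‖) := by
          rw [norm_mul, norm_mul]
          gcongr
          · exact hC (m, n)
          · exact (norm_sub_le _ _).trans (by gcongr)
      _ = C * ‖thetaCoeff q n * 1 ^ n‖ + C * ‖z⁻¹‖ * ‖thetaCoeff q n * z⁻¹ ^ n‖ := by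
          simp only [norm_mul, norm_pow, one_pow, norm_one, pow_succ]
          ring

lemma jtheta_ne_zero_of_norm_lt_one (hq0 : q ≠ 0) (hq1 : ‖q‖ < 1) {z : ℂ} (hz0 : z ≠ 0)
    (hz1 : ‖z‖ < 1) (hz : ∀ n : ℕ, z ≠ q ^ (n + 1)) : jtheta z q ≠ 0 := by
  intro jtheta_eq_zero
  have sum_eq_zero (m : ℕ) : ∑' n : ℕ,
      thetaCoeff q n * qBinom q m n * (z ^ (m + n) - z⁻¹ ^ (n + 1)) = 0 := by
    simpa only [jtheta_eq_zero, zero_mul, one_pow, mul_one] using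
      (hasSum_nat_jtheta_mul_rogersSzego hq0 hq1 hz0 1 m).tsum_eq
  have limit_eq_zero := tendsto_nhds_unique (tendsto_tsum_thetaCoeff_mul_qBinom hq0 hq1 hz1)
    (tendsto_const_nhds.congr fun m => (sum_eq_zero m).symm)
  have factor_ne (j : ℕ) : 1 - q * z⁻¹ * q ^ j ≠ 0 := by
    intro h
    apply hz j
    field_simp at h
    linear_combination h
  exact mul_ne_zero (neg_ne_zero.2 (inv_ne_zero hz0)) (qPochInf_ne_zero hq1 factor_ne) limit_eq_zero

lemma jtheta_ne_zero (hq0 : q ≠ 0) (hq1 : ‖q‖ < 1) {z : ℂ} (hz0 : z ≠ 0)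
    (hz : ∀ n : ℤ, z ≠ q ^ n) : jtheta z q ≠ 0 := by
  intro jtheta_eq_zero
  have shift_eq_zero (n : ℕ) : jtheta (q ^ n * z) q = 0 := by
    induction n with
    | zero => simpa using jtheta_eq_zero
    | succ n ih =>
      have shift := jtheta_inv_mul hq0 hq1 (mul_ne_zero (pow_ne_zero (n + 1) hq0) hz0)
      rw [← mul_assoc, pow_succ', inv_mul_cancel_left₀ hq0, ih] at shift
      rw [pow_succ']
      exact (mul_eq_zero.1 shift.symm).resolve_left (by simp [hq0, hz0])
  have norm_tendsto : Tendsto (fun n : ℕ => ‖q ^ n * z‖) atTop (𝓝 0) := by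
    simpa using ((tendsto_pow_atTop_nhds_zero_of_norm_lt_one hq1).mul_const z).norm
  obtain ⟨n, hn⟩ := (norm_tendsto.eventually_lt_const one_pos).exists
  refine jtheta_ne_zero_of_norm_lt_one hq0 hq1 (mul_ne_zero (pow_ne_zero n hq0) hz0) hn
    (fun m h => hz (m + 1 - n) ?_) (shift_eq_zero n)
  rw [zpow_sub₀ hq0, eq_div_iff (zpow_ne_zero _ hq0), mul_comm]
  exact_mod_cast h

end ThetaZeros

section EulerExpansion

lemma hasSum_sum_antidiagonal {A α : Type*} [AddCommMonoid A] [HasAntidiagonal A]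
    [AddCommMonoid α] [TopologicalSpace α] [ContinuousAdd α] [RegularSpace α] {f : A × A → α}
    {s : α} (hf : HasSum f s) :
    HasSum (fun n => ∑ p ∈ antidiagonal n, f p) s :=
  (HasAntidiagonal.sigmaAntidiagonalEquivProd.hasSum_iff.2 hf).sigma
    fun n => (antidiagonal n).hasSum f

variable {q : ℂ}

lemma exists_norm_pow_mul_div_qPoch_le (hq1 : ‖q‖ < 1) :
    ∃ C, ∀ p : ℕ × ℕ, ‖q ^ (p.1 * p.2) / (qPoch q q p.1 * qPoch q q p.2)‖ ≤ C := by
  obtain ⟨C, hC⟩ := exists_norm_inv_qPoch_self_le hq1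
  have C_nonneg : 0 ≤ C := (norm_nonneg _).trans (hC 0)
  refine ⟨1 * (C * C), fun p => ?_⟩
  rw [div_eq_mul_inv, mul_inv, norm_mul, norm_mul, norm_pow]
  gcongr
  exacts [pow_le_one₀ (norm_nonneg q) hq1.le, hC _, hC _]

lemma hasSum_rogersSzegoSeries (hq0 : q ≠ 0) (hq1 : ‖q‖ < 1) (a b : ℂ) :
    HasSum (fun p : ℕ × ℕ => q ^ (p.1 * p.2) / (qPoch q q p.1 * qPoch q q p.2) *
      (thetaCoeff q p.1 * a ^ p.1 * (thetaCoeff q p.2 * b ^ p.2))) (rogersSzegoSeries a b q) := by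
  obtain ⟨s, hasSum_s⟩ :=
    summable_mul_thetaCoeff_mul_pow hq0 hq1 (exists_norm_pow_mul_div_qPoch_le hq1) a b
  have degree_term (n : ℕ) : thetaCoeff q n * rogersSzego a b q n = ∑ p ∈ antidiagonal n,
      q ^ (p.1 * p.2) / (qPoch q q p.1 * qPoch q q p.2) *
        (thetaCoeff q p.1 * a ^ p.1 * (thetaCoeff q p.2 * b ^ p.2)) := by
    rw [rogersSzego, mul_sum]
    refine sum_congr rfl fun p hp => ?_
    rw [← mem_antidiagonal.1 hp, Nat.cast_add, thetaCoeff_add hq0, ← Nat.cast_mul, zpow_natCast]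
    ring
  have series_eq : rogersSzegoSeries a b q = s :=
    ((hasSum_sum_antidiagonal hasSum_s).congr_fun degree_term).tsum_eq
  rwa [series_eq]

lemma rogersSzegoSeries_eq_tsum (hq0 : q ≠ 0) (hq1 : ‖q‖ < 1) (a b : ℂ) :
    rogersSzegoSeries a b q =
      ∑' k : ℕ, thetaCoeff q k * b ^ k / qPoch q q k * qPochInf (q * (a * q ^ k)) q := by
  have swapped := (Equiv.prodComm ℕ ℕ).hasSum_iff.2 (hasSum_rogersSzegoSeries hq0 hq1 a b)
  refine (swapped.prod_fiberwise fun k => ?_).tsum_eq.symm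
  refine ((hasSum_thetaCoeff_mul_pow_div_qPoch hq0 hq1 (a * q ^ k)).mul_left
    (thetaCoeff q k * b ^ k / qPoch q q k)).congr_fun fun l => ?_
  simp only [Function.comp_apply, Equiv.prodComm_apply, Prod.swap_prod_mk]
  rw [mul_pow, ← pow_mul, mul_comm k]
  field_simp

lemma rogersSzegoSeries_eq_qPochInf_mul (hq0 : q ≠ 0) (hq1 : ‖q‖ < 1) {a : ℂ}
    (ha : ∀ j : ℕ, 1 - q * a * q ^ j ≠ 0) (b : ℂ) :
    rogersSzegoSeries a b q = qPochInf (q * a) q *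
      ∑' k : ℕ, thetaCoeff q k * b ^ k / (qPoch q q k * qPoch (q * a) q k) := by
  rw [rogersSzegoSeries_eq_tsum hq0 hq1, ← tsum_mul_left]
  refine tsum_congr fun k => ?_
  rw [← qPoch_mul_qPochInf hq1 (q * a) k, mul_assoc q a]
  field_simp [qPoch_ne_zero (n := k) fun j _ => ha j]

end EulerExpansion

section Solutions

variable {q : ℂ}

/-- The prefactor that `fneg1 t x q` and `gxinv t x q` have in common. -/
noncomputable def solutionFactor (t x q : ℂ) : ℂ :=
  jtheta (q⁻¹ * x) q / ((1 - x) * jtheta t q * qPochInf q q * t)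

lemma solutionFactor_inv (hq0 : q ≠ 0) (hq1 : ‖q‖ < 1) {x : ℂ} (hx0 : x ≠ 0) (t : ℂ) :
    solutionFactor t x⁻¹ q = solutionFactor t x q := by
  rw [solutionFactor, solutionFactor, jtheta_inv_mul hq0 hq1 hx0,
    jtheta_inv_mul hq0 hq1 (inv_ne_zero hx0), jtheta_inv hq0 hq1 hx0]
  rcases eq_or_ne x 1 with rfl | hx1
  · simp
  have one_sub_ne := sub_ne_zero.2 hx1.symm
  have one_sub_inv : 1 - x⁻¹ = -(1 - x) / x := by
    field_simp
    ring
  rw [one_sub_inv]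
  field_simp

lemma fneg1_eq_neg_solutionFactor_mul (hq0 : q ≠ 0) (hq1 : ‖q‖ < 1) {t x : ℂ} (ht : t ≠ 0)
    (hx : x ≠ 0) :
    fneg1 t x q = -(solutionFactor t x q * rogersSzegoSeries (t * x) (t / x) q) := by
  have series_eq : (∑' k : ℕ, ∑ l ∈ range (k + 1),
      (-1 : ℂ) ^ k * q ^ (k * (k + 1) / 2) * x ^ (2 * (l : ℤ) - k) * t ^ k /
        (qPoch q q l * qPoch q q (k - l))) = rogersSzegoSeries (t * x) (t / x) q := by
    refine tsum_congr fun k => ?_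
    rw [rogersSzego, ← Nat.sum_antidiagonal_eq_sum_range_succ fun l m =>
      (-1 : ℂ) ^ k * q ^ (k * (k + 1) / 2) * x ^ (2 * (l : ℤ) - k) * t ^ k /
        (qPoch q q l * qPoch q q m), mul_sum]
    refine sum_congr rfl fun p hp => ?_
    have exponent_eq : 2 * (p.1 : ℤ) - (p.1 + p.2 : ℕ) = p.1 - p.2 := by
      push_cast
      ring
    rw [← mem_antidiagonal.1 hp, exponent_eq, zpow_sub₀ hx, zpow_natCast, zpow_natCast,
      ← thetaCoeff_natCast, pow_add]
    ring
  rw [fneg1, series_eq, solutionFactor, jtheta_inv_mul hq0 hq1 ht]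
  field_simp

lemma gxinv_eq_solutionFactor_mul (hq0 : q ≠ 0) (hq1 : ‖q‖ < 1) {t x : ℂ} (ht : t ≠ 0)
    (hx : ∀ j : ℕ, 1 - q * x ^ 2 * q ^ j ≠ 0) :
    gxinv t x q = solutionFactor t x q *
      (jtheta (t * x) q * rogersSzegoSeries (x ^ 2) (x / t) q / jtheta (x ^ 2) q) := by
  rw [gxinv, solutionFactor, rogersSzegoSeries_eq_qPochInf_mul hq0 hq1 hx]
  have series_eq : (∑' k : ℕ, (-1 : ℂ) ^ k * q ^ (k * (k + 1) / 2) * x ^ k * t ^ (-(k : ℤ) - 1) /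
      (qPoch q q k * qPoch (q * x ^ 2) q k)) =
      t⁻¹ * ∑' k : ℕ, thetaCoeff q k * (x / t) ^ k / (qPoch q q k * qPoch (q * x ^ 2) q k) := by
    rw [← tsum_mul_left]
    refine tsum_congr fun k => ?_
    rw [thetaCoeff_natCast, zpow_sub_one₀ ht, zpow_neg, zpow_natCast, div_pow]
    ring
  rw [series_eq]
  field_simp

end Solutions

/-- `f^{(−1)}(t,x,q) = − g^{(0,x^{−1})}(t,x,q) − g^{(0,x)}(t,x,q)`. -/
theorem fneg1_eq_neg_gx_sum
    (q : ℂ) (hq0 : 0 < ‖q‖) (hq1 : ‖q‖ < 1)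
    (x : ℂ) (hx : x ≠ 0) (hx2 : ∀ n : ℤ, x ^ 2 ≠ q ^ n)
    (t : ℂ) (ht : t ≠ 0) (htq : ∀ n : ℤ, t ≠ q ^ n) :
    fneg1 t x q = -gxinv t x q - gxinv t x⁻¹ q := by
  have q_ne : q ≠ 0 := norm_pos_iff.1 hq0
  have hx2_inv (n : ℤ) : x⁻¹ ^ 2 ≠ q ^ n := by
    rw [inv_pow, ne_eq, inv_eq_iff_eq_inv, ← zpow_neg]
    exact hx2 (-n)
  have three_term :=
    jtheta_div_mul_rogersSzegoSeries q_ne hq1 (mul_ne_zero ht hx) (div_ne_zero ht hx)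
  have div_eq_sq : t * x / (t / x) = x ^ 2 := by field_simp
  have div_eq_inv_sq : t / x / (t * x) = (x ^ 2)⁻¹ := by field_simp
  have inv_eq : (t * x)⁻¹ = x⁻¹ / t := by rw [mul_inv_rev, div_eq_mul_inv]
  rw [div_eq_sq, div_eq_inv_sq, inv_div, inv_eq, div_eq_mul_inv t x] at three_term
  have theta_inv_sq := jtheta_inv q_ne hq1 (pow_ne_zero 2 hx)
  have theta_ne := jtheta_ne_zero q_ne hq1 (pow_ne_zero 2 hx) hx2
  rw [fneg1_eq_neg_solutionFactor_mul q_ne hq1 ht hx,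
    gxinv_eq_solutionFactor_mul q_ne hq1 ht (one_sub_mul_pow_ne_zero_of_ne_zpow q_ne hx2),
    gxinv_eq_solutionFactor_mul q_ne hq1 ht (one_sub_mul_pow_ne_zero_of_ne_zpow q_ne hx2_inv),
    solutionFactor_inv q_ne hq1 hx, div_eq_mul_inv t x, inv_pow, theta_inv_sq]
  rw [mul_comm, ← eq_div_iff theta_ne] at three_term
  rw [three_term]
  ring
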